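/- Let a < b, 1/2 < α ≤ 1, and q continuous on [a,b]. If the integral equation u(x) = ∫_a^b G(x,t) q(t) u(t) dt has a nontrivial continuous solution, then ∫_a^b (K(a,a)K(s,s) - K(a,s)²) · q⁺(s) ds ≥ (b-a)^{2α-1}/(Γ(α)²(2α-1)), where q⁺(s) = max{q(s), 0}. -/

import Mathlib

open Real MeasureTheory Set

/-- Kernel `K(x,t) = (1/Γ(α)²) ∫_{max{x,t}}^{b} (s-x)^{α-1}(s-t)^{α-1} ds`. -/
noncomputable def K (b α x t : ℝ) : ℝ :=
  (1 / Real.Gamma α ^ 2) * ∫ s in max x t..b, (s - x) ^ (α - 1) * (s - t) ^ (α - 1)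

/-- Green's function `G(x,t) = K(x,t) - K(a,t)K(x,a)/K(a,a)`. -/
noncomputable def G (a b α x t : ℝ) : ℝ :=
  K b α x t - K b α a t * K b α x a / K b α a a

/-!
For `α > 1/2` the kernel `K` is a Gram kernel: `K(x,t) = ⟪φ x, φ t⟫` in `L²(-∞, b]`, where
`φ t (s) = (s-t)₊^(α-1) / Γ(α)`. Hence `G(x,t) = ⟪ψ x, ψ t⟫`, where `ψ` is the component of `φ`
orthogonal to `φ a`, and both depend continuously on `t` because translation is continuous in `L²`.
A solution of the integral equation is then `u x = ⟪ψ x, v⟫` with `v = ∫ q u ψ ≠ 0`, so that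
`‖v‖² = ∫ q u² ≤ ∫ q⁺ ‖ψ‖² ‖v‖²` by Cauchy–Schwarz. Cancelling `‖v‖²` gives `1 ≤ ∫ G(s,s) q⁺(s) ds`,
and multiplying by `K(a,a)` gives the inequality.
-/

section GramKernel

variable {X H : Type*} [MeasurableSpace X] {μ : Measure X}
  [NormedAddCommGroup H] [InnerProductSpace ℝ H] [CompleteSpace H]
  {ψ : X → H} {q u : X → ℝ}

theorem integral_inner_mul_mul (hquψ : Integrable (fun t ↦ (q t * u t) • ψ t) μ) (w : H) :
    ∫ t, inner ℝ w (ψ t) * q t * u t ∂μ = inner ℝ w (∫ t, (q t * u t) • ψ t ∂μ) := by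
  rw [← integral_inner hquψ w]
  congr with t
  rw [real_inner_smul_right]
  ring

theorem one_le_setIntegral_norm_sq_mul_posPart {s : Set X} (hs : MeasurableSet s)
    (hquψ : IntegrableOn (fun t ↦ (q t * u t) • ψ t) s μ)
    (hqψ : IntegrableOn (fun t ↦ ‖ψ t‖ ^ 2 * max (q t) 0) s μ)
    (heq : ∀ x ∈ s, u x = ∫ t in s, inner ℝ (ψ x) (ψ t) * q t * u t ∂μ)
    (hnt : ∃ x ∈ s, u x ≠ 0) :
    1 ≤ ∫ t in s, ‖ψ t‖ ^ 2 * max (q t) 0 ∂μ := by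
  set v : H := ∫ t in s, (q t * u t) • ψ t ∂μ with hv
  have hu : ∀ x ∈ s, u x = inner ℝ v (ψ x) := fun x hx ↦ by
    rw [heq x hx, integral_inner_mul_mul hquψ, real_inner_comm]
  have hv_pos : 0 < ‖v‖ ^ 2 := by
    obtain ⟨x, hx, hux⟩ := hnt
    have hv_ne : v ≠ 0 := fun h ↦ hux (by rw [hu x hx, h, inner_zero_left])
    positivity
  refine le_of_mul_le_mul_right ?_ hv_pos
  calc 1 * ‖v‖ ^ 2 = ∫ t in s, inner ℝ v ((q t * u t) • ψ t) ∂μ := by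
        rw [integral_inner hquψ, ← hv, real_inner_self_eq_norm_sq, one_mul]
    _ ≤ ∫ t in s, ‖ψ t‖ ^ 2 * max (q t) 0 * ‖v‖ ^ 2 ∂μ := by
        refine setIntegral_mono_on (hquψ.const_inner v) (hqψ.mul_const _) hs fun t ht ↦ ?_
        have hut : u t ^ 2 ≤ ‖v‖ ^ 2 * ‖ψ t‖ ^ 2 := by
          rw [hu t ht, ← mul_pow]
          exact sq_le_sq.2 ((abs_real_inner_le_norm v (ψ t)).trans (le_abs_self _))
        calc inner ℝ v ((q t * u t) • ψ t) = q t * u t ^ 2 := by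
              rw [real_inner_smul_right, ← hu t ht]
              ring
          _ ≤ max (q t) 0 * (‖v‖ ^ 2 * ‖ψ t‖ ^ 2) := by
              gcongr
              exact le_max_left _ _
          _ = ‖ψ t‖ ^ 2 * max (q t) 0 * ‖v‖ ^ 2 := by ring
    _ = (∫ t in s, ‖ψ t‖ ^ 2 * max (q t) 0 ∂μ) * ‖v‖ ^ 2 := integral_mul_const _ _

end GramKernel

theorem one_le_intervalIntegral_norm_sq_mul_posPart {H : Type*} [NormedAddCommGroup H]
    [InnerProductSpace ℝ H] [CompleteSpace H] {a b : ℝ} {ψ : ℝ → H} {q u : ℝ → ℝ} (hab : a ≤ b)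
    (hψ : ContinuousOn ψ (Icc a b)) (hq : IntervalIntegrable q volume a b)
    (hqu : IntervalIntegrable (fun t ↦ q t * u t) volume a b)
    (heq : ∀ x ∈ Icc a b, u x = ∫ t in a..b, inner ℝ (ψ x) (ψ t) * q t * u t)
    (hnt : ∃ x ∈ Icc a b, u x ≠ 0) :
    1 ≤ ∫ t in a..b, ‖ψ t‖ ^ 2 * max (q t) 0 := by
  rw [intervalIntegrable_iff_integrableOn_Icc_of_le hab] at hq hqu
  simp only [intervalIntegral.integral_of_le hab, ← integral_Icc_eq_integral_Ioc] at heq ⊢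
  exact one_le_setIntegral_norm_sq_mul_posPart measurableSet_Icc
    (hqu.smul_continuousOn hψ isCompact_Icc)
    (IntegrableOn.continuousOn_mul (hψ.norm.pow 2) hq.pos_part isCompact_Icc) heq hnt

theorem inner_starProjection_orthogonal_singleton {𝕜 E : Type*} [RCLike 𝕜] [NormedAddCommGroup E]
    [InnerProductSpace 𝕜 E] (v x y : E) :
    inner 𝕜 ((𝕜 ∙ v)ᗮ.starProjection x) ((𝕜 ∙ v)ᗮ.starProjection y) =
      inner 𝕜 x y - inner 𝕜 v y * inner 𝕜 x v / inner 𝕜 v v := by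
  rw [Submodule.inner_starProjection_left_eq_right,
    Submodule.starProjection_eq_self_iff.2 (Submodule.starProjection_apply_mem _ y),
    Submodule.starProjection_orthogonal_val, Submodule.starProjection_singleton, inner_sub_right,
    inner_smul_right, inner_self_eq_norm_sq_to_K]
  push_cast
  ring

theorem K_comm (b α x t : ℝ) : K b α x t = K b α t x := by
  simp only [K, max_comm x t, mul_comm]

section FractionalKernel

variable {a b α x t : ℝ}

/-- The convolution kernel `x ↦ x₊^(α-1) / Γ(α)` of the Riemann–Liouville integral of order `α`,
cut off at `c` to make it square integrable. -/
noncomputable def fractionalKernel (α c : ℝ) : ℝ → ℝ :=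
  (Ioc 0 c).indicator fun x ↦ x ^ (α - 1) / Gamma α

theorem memLp_fractionalKernel (hα : 1 / 2 < α) (c : ℝ) : MemLp (fractionalKernel α c) 2 := by
  have hmeas : Measurable fun x : ℝ ↦ x ^ (α - 1) / Gamma α := by fun_prop
  rw [fractionalKernel, memLp_indicator_iff_restrict measurableSet_Ioc,
    memLp_two_iff_integrable_sq hmeas.aestronglyMeasurable]
  have hint : IntegrableOn (fun x : ℝ ↦ x ^ ((α - 1) * 2) / Gamma α ^ 2) (Ioc 0 c) :=
    (intervalIntegral.intervalIntegrable_rpow' (by linarith)).1.div_const _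
  refine hint.congr_fun (fun x hx ↦ ?_) measurableSet_Ioc
  simp only [div_pow, rpow_mul hx.1.le, rpow_two]

/-- The vector `s ↦ (s-t)₊^(α-1) / Γ(α)` of `L²(-∞, b]`, whose Gram matrix on `[a, b]` is `K`.
Since `s - t ≤ b - a` for `s ≤ b` and `a ≤ t`, cutting the kernel off at `b - a` changes nothing
for these `t`. -/
noncomputable def kernelVector (a b : ℝ) (hα : 1 / 2 < α) (t : ℝ) :
    Lp ℝ 2 (volume.restrict (Iic b)) :=
  LpToLpRestrictCLM ℝ ℝ ℝ volume 2 (Iic b)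
    (DomAddAct.mk (-t) +ᵥ (memLp_fractionalKernel hα (b - a)).toLp)

theorem continuous_kernelVector (hα : 1 / 2 < α) : Continuous (kernelVector a b hα) := by
  have htwo : Fact ((2 : ENNReal) ≠ ⊤) := ⟨ENNReal.ofNat_ne_top⟩
  exact (ContinuousLinearMap.continuous _).comp
    ((DomAddAct.continuous_mk.comp continuous_neg).vadd continuous_const)

theorem kernelVector_ae_eq (hα : 1 / 2 < α) (ht : a ≤ t) :
    kernelVector a b hα t =ᵐ[volume.restrict (Iic b)]
      (Ioi t).indicator fun s ↦ (s - t) ^ (α - 1) / Gamma α := by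
  have htranslate : ⇑(DomAddAct.mk (-t) +ᵥ (memLp_fractionalKernel hα (b - a)).toLp) =ᵐ[volume]
      fun s ↦ fractionalKernel α (b - a) (s - t) := by
    rw [DomAddAct.mk_vadd_toLp]
    simpa only [vadd_eq_add, neg_add_eq_sub] using MemLp.coeFn_toLp _
  refine (LpToLpRestrictCLM_coeFn ℝ (Iic b) _).trans ?_
  filter_upwards [ae_restrict_of_ae htranslate, ae_restrict_mem measurableSet_Iic] with s hs hsb
  have hmem : s - t ∈ Ioc 0 (b - a) ↔ s ∈ Ioi t :=
    ⟨fun h ↦ sub_pos.1 h.1, fun h ↦ ⟨sub_pos.2 h, sub_le_sub hsb ht⟩⟩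
  rw [hs]
  simp only [fractionalKernel, indicator_apply, hmem]

theorem inner_kernelVector (hα : 1 / 2 < α) (hx : x ∈ Icc a b) (ht : t ∈ Icc a b) :
    inner ℝ (kernelVector a b hα x) (kernelVector a b hα t) = K b α x t := by
  have hprod : (fun s ↦ inner ℝ (kernelVector a b hα x s) (kernelVector a b hα t s))
      =ᵐ[volume.restrict (Iic b)] (Ioi (max x t)).indicator fun s ↦
        1 / Gamma α ^ 2 * ((s - x) ^ (α - 1) * (s - t) ^ (α - 1)) := by
    filter_upwards [kernelVector_ae_eq hα hx.1, kernelVector_ae_eq hα ht.1] with s hxs hts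
    rw [hxs, hts, Real.inner_apply, ← inter_indicator_mul, Ioi_inter_Ioi]
    congr with s
    ring
  rw [L2.inner_def, integral_congr_ae hprod, setIntegral_indicator measurableSet_Ioi,
    inter_comm, Ioi_inter_Iic, integral_const_mul, K,
    intervalIntegral.integral_of_le (max_le hx.2 ht.2)]

theorem K_self (hα : 1 / 2 < α) (ht : t ≤ b) :
    K b α t t = (b - t) ^ (2 * α - 1) / (Gamma α ^ 2 * (2 * α - 1)) := by
  have hsq : ∫ s in t..b, (s - t) ^ (α - 1) * (s - t) ^ (α - 1) =
      ∫ s in t..b, (s - t) ^ ((α - 1) * 2) := by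
    refine intervalIntegral.integral_congr fun s hs ↦ ?_
    rw [uIcc_of_le ht] at hs
    simp only [rpow_mul (sub_nonneg.2 hs.1), rpow_two, sq]
  have hexp : (α - 1) * 2 + 1 = 2 * α - 1 := by ring
  rw [K, max_self, hsq, intervalIntegral.integral_comp_sub_right (fun x ↦ x ^ ((α - 1) * 2)) t,
    integral_rpow (Or.inl (by linarith)), hexp, sub_self, zero_rpow (by linarith), sub_zero,
    div_mul_div_comm, one_mul]

theorem K_self_pos (hα : 1 / 2 < α) (ht : t < b) : 0 < K b α t t := by
  rw [K_self hα ht.le]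
  exact div_pos (rpow_pos_of_pos (sub_pos.2 ht) _)
    (mul_pos (pow_pos (Gamma_pos_of_pos (by linarith)) 2) (by linarith))

theorem K_mul_G_self (hK : K b α a a ≠ 0) :
    K b α a a * G a b α t t = K b α a a * K b α t t - K b α a t ^ 2 := by
  rw [G, K_comm b α t a]
  field_simp

/-- The component of `kernelVector` orthogonal to `kernelVector a`; its Gram matrix on `[a, b]`
is `G`. -/
noncomputable def greenVector (a b : ℝ) (hα : 1 / 2 < α) (t : ℝ) :
    Lp ℝ 2 (volume.restrict (Iic b)) :=
  (ℝ ∙ kernelVector a b hα a)ᗮ.starProjection (kernelVector a b hα t)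

theorem continuous_greenVector (hα : 1 / 2 < α) : Continuous (greenVector a b hα) :=
  (ContinuousLinearMap.continuous _).comp (continuous_kernelVector hα)

theorem inner_greenVector (hα : 1 / 2 < α) (hx : x ∈ Icc a b) (ht : t ∈ Icc a b) :
    inner ℝ (greenVector a b hα x) (greenVector a b hα t) = G a b α x t := by
  have ha : a ∈ Icc a b := left_mem_Icc.2 (hx.1.trans hx.2)
  rw [greenVector, greenVector, inner_starProjection_orthogonal_singleton,
    inner_kernelVector hα hx ht, inner_kernelVector hα ha ht, inner_kernelVector hα hx ha,
    inner_kernelVector hα ha ha, G]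

theorem one_le_integral_G_self_mul_posPart (hab : a ≤ b) (hα : 1 / 2 < α) {q u : ℝ → ℝ}
    (hq : IntervalIntegrable q volume a b)
    (hqu : IntervalIntegrable (fun t ↦ q t * u t) volume a b)
    (hnt : ∃ x ∈ Icc a b, u x ≠ 0)
    (heq : ∀ x ∈ Icc a b, u x = ∫ t in a..b, G a b α x t * q t * u t) :
    1 ≤ ∫ s in a..b, G a b α s s * max (q s) 0 := by
  have heq' : ∀ x ∈ Icc a b, u x =
      ∫ t in a..b, inner ℝ (greenVector a b hα x) (greenVector a b hα t) * q t * u t := by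
    intro x hx
    rw [heq x hx]
    refine intervalIntegral.integral_congr fun t ht ↦ ?_
    simp only [inner_greenVector hα hx (uIcc_of_le hab ▸ ht)]
  refine (one_le_intervalIntegral_norm_sq_mul_posPart hab (continuous_greenVector hα).continuousOn
    hq hqu heq' hnt).trans_eq (intervalIntegral.integral_congr fun s hs ↦ ?_)
  rw [uIcc_of_le hab] at hs
  simp only [← inner_greenVector hα hs hs, real_inner_self_eq_norm_sq]

theorem hartman_wintner_fractional_general (hab : a < b) (hα : 1 / 2 < α) {q u : ℝ → ℝ}
    (hq : IntervalIntegrable q volume a b)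
    (hqu : IntervalIntegrable (fun t ↦ q t * u t) volume a b)
    (hnt : ∃ x ∈ Icc a b, u x ≠ 0)
    (heq : ∀ x ∈ Icc a b, u x = ∫ t in a..b, G a b α x t * q t * u t) :
    (∫ s in a..b, (K b α a a * K b α s s - K b α a s ^ 2) * max (q s) 0) ≥
      (b - a) ^ (2 * α - 1) / (Gamma α ^ 2 * (2 * α - 1)) := by
  have hK : 0 < K b α a a := K_self_pos hα hab
  calc (∫ s in a..b, (K b α a a * K b α s s - K b α a s ^ 2) * max (q s) 0)
      = K b α a a * ∫ s in a..b, G a b α s s * max (q s) 0 := by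
        simp only [← K_mul_G_self hK.ne', mul_assoc, intervalIntegral.integral_const_mul]
    _ ≥ K b α a a :=
        le_mul_of_one_le_right hK.le (one_le_integral_G_self_mul_posPart hab.le hα hq hqu hnt heq)
    _ = (b - a) ^ (2 * α - 1) / (Gamma α ^ 2 * (2 * α - 1)) := K_self hα hab.le

end FractionalKernel

/-- Hartman–Wintner-type inequality for the fractional problem. -/
theorem hartman_wintner_fractional (a b α : ℝ) (hab : a < b)
    (hα₁ : 1 / 2 < α) (hα₂ : α ≤ 1)
    (q u : ℝ → ℝ) (hq : ContinuousOn q (Set.Icc a b)) (hu : ContinuousOn u (Set.Icc a b))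
    (hnt : ∃ x ∈ Set.Icc a b, u x ≠ 0)
    (heq : ∀ x ∈ Set.Icc a b, u x = ∫ t in a..b, G a b α x t * q t * u t) :
    (∫ s in a..b, (K b α a a * K b α s s - K b α a s ^ 2) * max (q s) 0) ≥
      (b - a) ^ (2 * α - 1) / (Real.Gamma α ^ 2 * (2 * α - 1)) :=
  hartman_wintner_fractional_general hab hα₁ (hq.intervalIntegrable_of_Icc hab.le)
    ((hq.mul hu).intervalIntegrable_of_Icc hab.le) hnt heq
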